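/- Let (A,Λ) be any associative form ring and n ≥ 3. Then for any two comaximal form ideals (I,Γ) and (J,Δ) of (A,Λ), i.e. such that I + J = A, one has the equality [EU(2n,I,Γ), EU(2n,J,Δ)] = EU(2n,(I,Γ)∘(J,Δ)). -/

import Mathlib

open Matrix
open scoped commutatorElement

/-- Bak's form ring data on a ring `A`: an involution `bar`, a central symmetry
`λ` with `λ λ̄ = 1`, and a form parameter `Λ`. -/
structure FormRingData (A : Type*) [Ring A] where
  bar : A →+ A
  bar_mul : ∀ a b : A, bar (a * b) = bar b * bar a
  bar_bar : ∀ a : A, bar (bar a) = a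
  lam : A
  lam_comm : ∀ a : A, lam * a = a * lam
  lam_bar : lam * bar lam = 1
  Lambda : AddSubgroup A
  lambdaMin_mem : ∀ c : A, c - lam * bar c ∈ Lambda
  lambdaMax_mem : ∀ x ∈ Lambda, x = -(lam * bar x)
  lambda_conj : ∀ (c : A), ∀ x ∈ Lambda, c * x * bar c ∈ Lambda

namespace FormRingData

variable {A : Type*} [Ring A]

/-- Integral powers of the symmetry `λ`; negative powers use `λ̄ = λ⁻¹`. -/
def lpow (D : FormRingData A) (k : ℤ) : A :=
  if 0 ≤ k then D.lam ^ k.toNat else (D.bar D.lam) ^ (-k).toNat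

end FormRingData

/-- The index set `Ω = {1,…,n,−n,…,−1}`, coded as `Fin n × Bool`
(second component `true` = positive index). -/
abbrev Idx (n : ℕ) := Fin n × Bool

namespace Idx

/-- The involution `i ↦ −i` on indices. -/
def neg {n : ℕ} (i : Idx n) : Idx n := (i.1, !i.2)

/-- The sign `ε(i) ∈ {±1}`. -/
def eps {n : ℕ} (i : Idx n) : ℤ := if i.2 then 1 else -1

theorem neg_ne {n : ℕ} (i : Idx n) : neg i ≠ i := by
  simp [neg, Prod.ext_iff]

theorem neg_injective {n : ℕ} : Function.Injective (neg (n := n)) := by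
  intro i j h
  simp only [neg, Prod.mk.injEq] at h
  refine Prod.ext h.1 ?_
  have h2 := h.2
  cases hi : i.2 <;> cases hj : j.2 <;> simp_all

theorem neg_neg {n : ℕ} (i : Idx n) : neg (neg i) = i := by
  simp [neg]

end Idx

/-- `GL(2n, A)`, realised as the units of the `Ω × Ω` matrix ring over `A`. -/
abbrev GLn (A : Type*) [Ring A] (n : ℕ) := (Matrix (Idx n) (Idx n) A)ˣ

section aux

theorem one_add_mul_one_sub {R : Type*} [Ring R] {X : R} (h : X * X = 0) :
    (1 + X) * (1 - X) = 1 := by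
  have hh : (1 + X) * (1 - X) = 1 - X * X := by noncomm_ring
  rw [hh, h, sub_zero]

theorem one_sub_mul_one_add {R : Type*} [Ring R] {X : R} (h : X * X = 0) :
    (1 - X) * (1 + X) = 1 := by
  have hh : (1 - X) * (1 + X) = 1 - X * X := by noncomm_ring
  rw [hh, h, sub_zero]

theorem stdBasisMatrix_neg' {A : Type*} [Ring A] {n : ℕ} (i j : Idx n) (c : A) :
    single i j (-c) = -single i j c := by
  refine eq_neg_of_add_eq_zero_left ?_
  rw [← Matrix.single_add]
  simp

end aux

namespace FormRingData

variable {A : Type*} [Ring A] {n : ℕ}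

/-- The off-diagonal part of a short root element. -/
def Xmat (D : FormRingData A) (i j : Idx n) (c : A) : Matrix (Idx n) (Idx n) A :=
  single i j c -
    single (Idx.neg j) (Idx.neg i) (D.lpow ((Idx.eps j - Idx.eps i) / 2) * D.bar c)

theorem Xmat_mul (D : FormRingData A) {i j : Idx n} (hij : i ≠ j) (c c' : A) :
    D.Xmat i j c * D.Xmat i j c' = 0 := by
  unfold Xmat
  rw [sub_mul, mul_sub, mul_sub,
    Matrix.single_mul_single_of_ne _ _ _ _ (Ne.symm hij),
    Matrix.single_mul_single_of_ne _ _ _ _ (Ne.symm (Idx.neg_ne j)),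
    Matrix.single_mul_single_of_ne _ _ _ _ (Idx.neg_ne i),
    Matrix.single_mul_single_of_ne _ _ _ _ (fun h => hij (Idx.neg_injective h))]
  simp

theorem Xmat_neg (D : FormRingData A) (i j : Idx n) (c : A) :
    D.Xmat i j (-c) = -D.Xmat i j c := by
  unfold Xmat
  rw [map_neg, mul_neg, stdBasisMatrix_neg', stdBasisMatrix_neg']
  abel

/-- The elementary short root unipotent `T_{ij}(c)`, for `i ≠ ±j`
(with junk value `1` when `i = j`). -/
def TS (D : FormRingData A) (i j : Idx n) (c : A) : GLn A n :=
  if h : i = j then 1 else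
    { val := 1 + D.Xmat i j c
      inv := 1 + D.Xmat i j (-c)
      val_inv := by
        rw [D.Xmat_neg, ← sub_eq_add_neg]
        exact one_add_mul_one_sub (D.Xmat_mul h c c)
      inv_val := by
        rw [D.Xmat_neg, ← sub_eq_add_neg]
        exact one_sub_mul_one_add (D.Xmat_mul h c c) }

/-- The elementary long root unipotent `T_{i,−i}(c)`. -/
def TL (D : FormRingData A) (i : Idx n) (c : A) : GLn A n where
  val := 1 + single i (Idx.neg i) c
  inv := 1 + single i (Idx.neg i) (-c)
  val_inv := by
    rw [stdBasisMatrix_neg', ← sub_eq_add_neg]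
    exact one_add_mul_one_sub (Matrix.single_mul_single_of_ne _ _ _ _ (Idx.neg_ne i) _)
  inv_val := by
    rw [stdBasisMatrix_neg', ← sub_eq_add_neg]
    exact one_sub_mul_one_add (Matrix.single_mul_single_of_ne _ _ _ _ (Idx.neg_ne i) _)

/-- The elementary unitary transvection `T_{ij}(c)` (long or short root type
according to whether `j = −i`). -/
def T (D : FormRingData A) (i j : Idx n) (c : A) : GLn A n :=
  if j = Idx.neg i then D.TL i c else D.TS i j c

/-- The elementary commutator `Y_{ij}(a,b) = [T_{ij}(a), T_{ji}(b)]`. -/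
def Y (D : FormRingData A) (i j : Idx n) (a b : A) : GLn A n :=
  ⁅D.T i j a, D.T j i b⁆

/-- The elementary conjugate `Z_{ij}(a,c) = T_{ji}(c) T_{ij}(a) T_{ji}(−c)`. -/
def Z (D : FormRingData A) (i j : Idx n) (a c : A) : GLn A n :=
  D.T j i c * D.T i j a * D.T j i (-c)

/-- The set of elementary unitary transvections of level `(I,Γ)`. -/
def transvGen (D : FormRingData A) (n : ℕ) (I Γ : AddSubgroup A) : Set (GLn A n) :=
  {x | ∃ i j : Idx n, i ≠ j ∧ i ≠ Idx.neg j ∧ ∃ c ∈ I, x = D.TS i j c} ∪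
    {x | ∃ i : Idx n, ∃ g ∈ Γ, x = D.TL i (D.lpow (-(Idx.eps i + 1) / 2) * g)}

/-- The unrelative elementary subgroup `FU(2n, I, Γ)`. -/
def FU (D : FormRingData A) (n : ℕ) (I Γ : AddSubgroup A) : Subgroup (GLn A n) :=
  Subgroup.closure (D.transvGen n I Γ)

/-- The absolute elementary unitary group `EU(2n, A, Λ)`. -/
def EUmax (D : FormRingData A) (n : ℕ) : Subgroup (GLn A n) :=
  D.FU n ⊤ D.Lambda

/-- The relative elementary subgroup `EU(2n, I, Γ)`: the normal closure of
`FU(2n, I, Γ)` in `EU(2n, A, Λ)`. -/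
def EU (D : FormRingData A) (n : ℕ) (I Γ : AddSubgroup A) : Subgroup (GLn A n) :=
  Subgroup.closure {x | ∃ g ∈ D.EUmax n, ∃ t ∈ D.transvGen n I Γ, x = g * t * g⁻¹}

/-- The additive subgroup generated by products `st`, `s ∈ S`, `t ∈ T`. -/
def mulSub (S T : AddSubgroup A) : AddSubgroup A :=
  AddSubgroup.closure {x | ∃ a ∈ S, ∃ b ∈ T, x = a * b}

/-- The symmetrised product `ST + TS` of two (additive subgroups underlying)
two-sided ideals. -/
def symI (S T : AddSubgroup A) : AddSubgroup A :=
  mulSub S T ⊔ mulSub T S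

/-- The minimal relative form parameter `Γ_min(K)` of level `K`. -/
def gammaMin (D : FormRingData A) (K : AddSubgroup A) : AddSubgroup A :=
  AddSubgroup.closure
    ({x | ∃ a ∈ K, x = a - D.lam * D.bar a} ∪
      {x | ∃ a ∈ K, ∃ c ∈ D.Lambda, x = a * c * D.bar a})

/-- The relative form parameter `ˢΓ = ⟨ b γ b̄ ∣ b ∈ S, γ ∈ Γ ⟩`. -/
def conjPar (D : FormRingData A) (S Γ : AddSubgroup A) : AddSubgroup A :=
  AddSubgroup.closure {x | ∃ b ∈ S, ∃ g ∈ Γ, x = b * g * D.bar b}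

/-- The relative form parameter of the symmetrised product
`(I,Γ)∘(J,Δ) = (IJ+JI, Γ_min(IJ+JI) + ᴶΓ + ᴵΔ)`. -/
def symG (D : FormRingData A) (I Γ J Δ : AddSubgroup A) : AddSubgroup A :=
  D.gammaMin (symI I J) ⊔ D.conjPar J Γ ⊔ D.conjPar I Δ

/-- The elementary subgroup `EU(2n, (I,Γ)∘(J,Δ))` of the symmetrised product. -/
def EUsym (D : FormRingData A) (n : ℕ) (I Γ J Δ : AddSubgroup A) : Subgroup (GLn A n) :=
  D.EU n (symI I J) (D.symG I Γ J Δ)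

/-- Position-dependent membership `a ∈ (I,Γ)` at position `(i,j)`:
`a ∈ I` for a short root position, `a ∈ λ^{−(ε(i)+1)/2}Γ` for a long one. -/
def pmem (D : FormRingData A) (I Γ : AddSubgroup A) {n : ℕ} (i j : Idx n) (a : A) : Prop :=
  if j = Idx.neg i then ∃ g ∈ Γ, a = D.lpow (-(Idx.eps i + 1) / 2) * g else a ∈ I

end FormRingData

/-- A form ideal `(I,Γ)` of the form ring `(A,Λ)`. -/
structure FormIdeal {A : Type*} [Ring A] (D : FormRingData A) where
  I : AddSubgroup A
  Gamma : AddSubgroup A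
  mul_mem_left : ∀ (c : A), ∀ x ∈ I, c * x ∈ I
  mul_mem_right : ∀ (c : A), ∀ x ∈ I, x * c ∈ I
  bar_mem : ∀ x ∈ I, D.bar x ∈ I
  gammaMin_le : D.gammaMin I ≤ Gamma
  gamma_le_I : Gamma ≤ I
  gamma_le_Lambda : Gamma ≤ D.Lambda
  gamma_conj : ∀ (c : A), ∀ x ∈ Gamma, c * x * D.bar c ∈ Gamma

set_option linter.unusedSimpArgs false
set_option linter.unusedVariables false

namespace FormRingData

variable {A : Type*} [Ring A] {n : ℕ}

theorem neg_eq_neg' {i j : Idx n} : Idx.neg i = Idx.neg j ↔ i = j :=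
  Idx.neg_injective.eq_iff

theorem neg_eq_iff' {i j : Idx n} : Idx.neg i = j ↔ i = Idx.neg j := by
  constructor
  · rintro rfl; rw [Idx.neg_neg]
  · rintro rfl; rw [Idx.neg_neg]

theorem ssm (i j k l : Idx n) (a b : A) :
    single i j a * single k l b = if j = k then single i l (a * b) else 0 := by
  split_ifs with h
  · subst h; simp
  · exact Matrix.single_mul_single_of_ne _ _ _ _ h _

theorem exists_third (hn : 3 ≤ n) (i j : Idx n) :
    ∃ k : Idx n, k ≠ i ∧ k ≠ Idx.neg i ∧ k ≠ j ∧ k ≠ Idx.neg j := by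
  have : ∃ m : Fin n, m ∉ ({i.1, j.1} : Finset (Fin n)) := by
    by_contra h
    push Not at h
    have h1 : (Finset.univ : Finset (Fin n)) ⊆ {i.1, j.1} := fun m _ => h m
    have h2 := Finset.card_le_card h1
    have h3 : ({i.1, j.1} : Finset (Fin n)).card ≤ 2 := Finset.card_le_two
    simp at h2
    omega
  obtain ⟨m, hm⟩ := this
  simp only [Finset.mem_insert, Finset.mem_singleton, not_or] at hm
  refine ⟨(m, true), ?_, ?_, ?_, ?_⟩ <;> intro h <;> have := congrArg Prod.fst h <;>
    simp [Idx.neg] at this <;> tauto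

variable (D : FormRingData A)

theorem bar_one : D.bar 1 = 1 := by
  have h := D.bar_mul (D.bar 1) 1
  rw [mul_one, D.bar_bar, mul_one] at h
  exact h.symm

theorem lam_bar' : D.bar D.lam * D.lam = 1 := by
  rw [← D.lam_comm, D.lam_bar]

theorem blam_comm (a : A) : D.bar D.lam * a = a * D.bar D.lam := by
  have := congrArg D.bar (D.lam_comm (D.bar a))
  rw [D.bar_mul, D.bar_mul, D.bar_bar] at this
  exact this.symm

theorem lpow_zero : D.lpow 0 = 1 := by simp [lpow]
theorem lpow_one : D.lpow 1 = D.lam := by simp [lpow]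
theorem lpow_neg_one : D.lpow (-1) = D.bar D.lam := by simp [lpow]

def star (i j : Idx n) (c : A) : A := D.lpow ((Idx.eps j - Idx.eps i) / 2) * D.bar c

def mu (i : Idx n) : A := D.lpow (-(Idx.eps i + 1) / 2)

theorem l1 (x : A) : D.lam * (D.bar D.lam * x) = x := by
  rw [← mul_assoc, D.lam_bar, one_mul]
theorem l2 (x : A) : D.bar D.lam * (D.lam * x) = x := by
  rw [← mul_assoc, D.lam_bar', one_mul]

/-- moves `λ`, `λ̄` to the left -/
theorem m1 (a x : A) : a * (D.lam * x) = D.lam * (a * x) := by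
  rw [← mul_assoc, ← D.lam_comm, mul_assoc]
theorem m2 (a x : A) : a * (D.bar D.lam * x) = D.bar D.lam * (a * x) := by
  rw [← mul_assoc, ← D.blam_comm, mul_assoc]

theorem star_cases (i j : Idx n) (c : A) : D.star i j c =
    match i.2, j.2 with
    | true, true => D.bar c
    | false, false => D.bar c
    | false, true => D.lam * D.bar c
    | true, false => D.bar D.lam * D.bar c := by
  obtain ⟨i, s⟩ := i
  obtain ⟨j, t⟩ := j
  cases s <;> cases t <;> simp [star, Idx.eps, lpow]

theorem mu_cases (i : Idx n) : D.mu i =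
    match i.2 with
    | true => D.bar D.lam
    | false => 1 := by
  obtain ⟨i, s⟩ := i
  cases s <;> simp [mu, Idx.eps, lpow]

theorem star_neg_star (i j : Idx n) (c : A) :
    D.star (Idx.neg j) (Idx.neg i) (D.star i j c) = c := by
  obtain ⟨i, s⟩ := i
  obtain ⟨j, t⟩ := j
  cases s <;> cases t <;>
    simp [star_cases, Idx.neg, D.bar_mul, D.bar_bar, ← D.lam_comm, ← D.blam_comm, D.l1, D.l2]

theorem star_mul (i j l : Idx n) (a b : A) :
    D.star j l b * D.star i j a = D.star i l (a * b) := by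
  obtain ⟨i, s⟩ := i
  obtain ⟨j, t⟩ := j
  obtain ⟨l, r⟩ := l
  cases s <;> cases t <;> cases r <;>
    simp only [star_cases, D.bar_mul, mul_assoc, D.m1 (D.bar b), D.m2 (D.bar b), D.l1, D.l2]

theorem bar_Lambda {g : A} (hg : g ∈ D.Lambda) : D.bar g = -(D.bar D.lam * g) := by
  have h := D.lambdaMax_mem g hg
  have : D.bar D.lam * g = - D.bar g := by
    conv_lhs => rw [h]
    rw [mul_neg, D.l2]
  rw [this, _root_.neg_neg]

theorem star_long (i j : Idx n) (a : A) {g : A} (hg : g ∈ D.Lambda) :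
    D.star i (Idx.neg j) (a * (D.mu j * g)) = -(D.mu j * g * D.star i j a) := by
  obtain ⟨i, s⟩ := i
  obtain ⟨j, t⟩ := j
  cases s <;> cases t <;>
    simp [star_cases, mu_cases, Idx.neg, D.bar_mul, D.bar_bar, mul_assoc, D.m1 g, D.m2 g,
      ← D.lam_comm, D.l1, D.l2, D.bar_Lambda hg, D.m1 (D.bar D.lam)]

theorem long_conj (i j : Idx n) (a g : A) :
    a * (D.mu j * g) * D.star i j a = D.mu i * (a * g * D.bar a) := by
  obtain ⟨i, s⟩ := i
  obtain ⟨j, t⟩ := j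
  cases s <;> cases t <;>
    simp [star_cases, mu_cases, mul_assoc, D.m1 g, D.m2 g, D.m1 a, D.m2 a, D.l1, D.l2]

theorem mu_min (i : Idx n) (c : A) :
    D.mu i * (c - D.lam * D.bar c) =
      (if i.2 then -D.bar c else c) -
        D.star i (Idx.neg i) (if i.2 then -D.bar c else c) := by
  obtain ⟨i, s⟩ := i
  cases s <;>
    simp [star_cases, mu_cases, Idx.neg, mul_sub, D.l2, D.bar_bar]
  abel

theorem min_mu (i : Idx n) (d : A) :
    d - D.star i (Idx.neg i) d =
    D.mu i * ((if i.2 then -D.bar d else d) - D.lam * D.bar (if i.2 then -D.bar d else d)) := by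
  rw [mu_min]
  split_ifs <;> simp [D.bar_bar]

/-! ### matrices -/

theorem TS_val {i j : Idx n} (h : i ≠ j) (c : A) :
    ((D.TS i j c : GLn A n) : Matrix (Idx n) (Idx n) A) =
      1 + (single i j c - single (Idx.neg j) (Idx.neg i) (D.star i j c)) := by
  simp [TS, h, Xmat, star]

theorem TL_val (i : Idx n) (c : A) :
    ((D.TL i c : GLn A n) : Matrix (Idx n) (Idx n) A) = 1 + single i (Idx.neg i) c := rfl

theorem star_add (i j : Idx n) (a b : A) : D.star i j (a + b) = D.star i j a + D.star i j b := by
  simp [star, mul_add]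

theorem star_neg (i j : Idx n) (a : A) : D.star i j (-a) = - D.star i j a := by
  simp [star]

theorem TS_add {i j : Idx n} (h : i ≠ j) (a b : A) :
    D.TS i j (a + b) = D.TS i j a * D.TS i j b := by
  ext1
  rw [Units.val_mul, D.TS_val h, D.TS_val h, D.TS_val h, star_add, single_add, single_add]
  have := D.Xmat_mul h a b
  unfold Xmat at this
  change (single i j a - single (Idx.neg j) (Idx.neg i) (D.star i j a)) *
    (single i j b - single (Idx.neg j) (Idx.neg i) (D.star i j b)) = 0 at this
  rw [mul_add, add_mul, add_mul, this]
  noncomm_ring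

theorem TL_add (i : Idx n) (a b : A) : D.TL i (a + b) = D.TL i a * D.TL i b := by
  ext1
  rw [Units.val_mul, D.TL_val, D.TL_val, D.TL_val, single_add]
  have : single i (Idx.neg i) a * single i (Idx.neg i) b = 0 :=
    Matrix.single_mul_single_of_ne _ _ _ _ (Idx.neg_ne i) _
  rw [mul_add, add_mul, add_mul, this]
  noncomm_ring

theorem TS_zero {i j : Idx n} (h : i ≠ j) : D.TS i j 0 = 1 := by
  have := D.TS_add h 0 0
  simpa using this

theorem TL_zero (i : Idx n) : D.TL i 0 = 1 := by
  have := D.TL_add i 0 0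
  simpa using this

theorem TS_neg {i j : Idx n} (h : i ≠ j) (a : A) : D.TS i j (-a) = (D.TS i j a)⁻¹ := by
  rw [eq_inv_iff_mul_eq_one, ← D.TS_add h, neg_add_cancel, D.TS_zero h]

theorem TL_neg (i : Idx n) (a : A) : D.TL i (-a) = (D.TL i a)⁻¹ := by
  rw [eq_inv_iff_mul_eq_one, ← D.TL_add, neg_add_cancel, D.TL_zero]

theorem TS_flip {i j : Idx n} (h : i ≠ j) (c : A) :
    D.TS i j c = D.TS (Idx.neg j) (Idx.neg i) (-(D.star i j c)) := by
  ext1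
  have h' : Idx.neg j ≠ Idx.neg i := fun e => h (Idx.neg_injective e).symm
  rw [D.TS_val h, D.TS_val h', D.star_neg, D.star_neg_star, stdBasisMatrix_neg',
    stdBasisMatrix_neg', Idx.neg_neg, Idx.neg_neg]
  abel

theorem comm_eq_of {x y z : GLn A n} (h : x * y = z * (y * x)) : ⁅x, y⁆ = z := by
  rw [commutatorElement_def, h]; group

/-- abstract matrix computation -/
theorem comm_of_mats {R : Type*} [Ring R] {X Y Z : R} (h : X * Y = Z + Y * X)
    (h1 : Z * Y = 0) (h2 : Z * X = 0) :
    (1 + X) * (1 + Y) = (1 + Z) * ((1 + Y) * (1 + X)) := by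
  have e : (1 + Z) * ((1 + Y) * (1 + X)) =
    1 + X + Y + (Z + Y * X) + Z * Y + Z * X + Z * Y * X := by noncomm_ring
  rw [e, h1, h2, ← h]
  noncomm_ring

theorem R1 {i j l : Idx n} (hij : i ≠ j) (hij' : i ≠ Idx.neg j) (hjl : j ≠ l)
    (hjl' : j ≠ Idx.neg l) (hil : i ≠ l) (hil' : i ≠ Idx.neg l) (a b : A) :
    ⁅D.TS i j a, D.TS j l b⁆ = D.TS i l (a * b) := by
  apply comm_eq_of
  ext1
  simp only [Units.val_mul, D.TS_val hij, D.TS_val hjl, D.TS_val hil]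
  have hii := Idx.neg_ne i
  have hjj := Idx.neg_ne j
  have hll := Idx.neg_ne l
  apply comm_of_mats <;>
    simp [sub_mul, mul_sub, ssm, neg_eq_iff', Idx.neg_neg, hij, hij', hjl, hjl', hil, hil',
      hij.symm, hjl.symm, hil.symm, hij'.symm, hjl'.symm, hil'.symm, D.star_mul,
      hii.symm, hjj.symm, hll.symm, hii, hjj, hll] <;> grind [Idx.neg_neg]

theorem R2 {i j : Idx n} (hij : i ≠ j) (hij' : i ≠ Idx.neg j) (a b : A) :
    ⁅D.TS i j a, D.TS j (Idx.neg i) b⁆ =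
      D.TL i (a * b - D.star i (Idx.neg i) (a * b)) := by
  have h3 : j ≠ Idx.neg i := fun e => hij' (by rw [e, Idx.neg_neg])
  apply comm_eq_of
  ext1
  simp only [Units.val_mul, D.TS_val hij, D.TS_val h3, D.TL_val]
  have hii := Idx.neg_ne i
  have hjj := Idx.neg_ne j
  rw [← D.star_mul i j (Idx.neg i), sub_eq_add_neg (a * b), single_add, stdBasisMatrix_neg']
  apply comm_of_mats <;>
    simp [sub_mul, mul_sub, add_mul, ssm, neg_eq_iff', Idx.neg_neg, hij, hij', h3,
      hij.symm, hij'.symm, h3.symm, 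
      hii.symm, hjj.symm, hii, hjj]

theorem R4 {i j : Idx n} (hij : i ≠ j) (hij' : i ≠ Idx.neg j) (a : A) {g : A}
    (hg : g ∈ D.Lambda) :
    ⁅D.TS i j a, D.TL j (D.mu j * g)⁆ =
      D.TS i (Idx.neg j) (a * (D.mu j * g)) * D.TL i (D.mu i * (a * g * D.bar a)) := by
  apply comm_eq_of
  ext1
  simp only [Units.val_mul, D.TS_val hij, D.TS_val hij', D.TL_val]
  rw [D.star_long i j a hg, ← D.long_conj i j, stdBasisMatrix_neg', Idx.neg_neg]
  generalize D.mu j * g = h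
  generalize D.star i j a = s
  have h3 : j ≠ Idx.neg i := fun e => hij' (by rw [e, Idx.neg_neg])
  have hii := Idx.neg_ne i
  have hjj := Idx.neg_ne j
  simp [sub_mul, mul_sub, add_mul, mul_add, ssm, neg_eq_iff', Idx.neg_neg, hij, hij', h3,
      hij.symm, hij'.symm, h3.symm, 
      hii.symm, hjj.symm, hii, hjj, mul_assoc]
  abel

theorem comm_one_of {R : Type*} [Ring R] {X Y : R} (h1 : X * Y = 0)
    (h2 : Y * X = 0) : (1 + X) * (1 + Y) = (1 + Y) * (1 + X) := by
  have : (1 + X) * (1 + Y) = 1 + X + Y + X * Y := by noncomm_ring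
  rw [this]
  have : (1 + Y) * (1 + X) = 1 + X + Y + Y * X := by noncomm_ring
  rw [this, h1, h2]

theorem R5 {i j k l : Idx n} (hij : i ≠ j) (hkl : k ≠ l)
    (h1 : j ≠ k) (h2 : j ≠ Idx.neg l) (h3 : i ≠ Idx.neg k) (h4 : i ≠ l) (a b : A) :
    ⁅D.TS i j a, D.TS k l b⁆ = 1 := by
  apply comm_eq_of
  rw [one_mul]
  ext1
  simp only [Units.val_mul, D.TS_val hij, D.TS_val hkl]
  have h2' : l ≠ Idx.neg j := fun e => h2 (by rw [e, Idx.neg_neg])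
  have h3' : k ≠ Idx.neg i := fun e => h3 (by rw [e, Idx.neg_neg])
  apply comm_one_of <;>
    simp [sub_mul, mul_sub, ssm, neg_eq_iff', Idx.neg_neg, h1, h2, h3, h4, h1.symm,
      h2.symm, h3.symm, h4.symm, h2', h3']

theorem R6 {i j k : Idx n} (hij : i ≠ j) (h1 : j ≠ k) (h2 : i ≠ Idx.neg k) (a b : A) :
    ⁅D.TS i j a, D.TL k b⁆ = 1 := by
  apply comm_eq_of
  rw [one_mul]
  ext1
  simp only [Units.val_mul, D.TS_val hij, D.TL_val]
  have h2' : k ≠ Idx.neg i := fun e => h2 (by rw [e, Idx.neg_neg])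
  apply comm_one_of <;>
    simp [sub_mul, mul_sub, ssm, neg_eq_iff', Idx.neg_neg, h1, h2, h1.symm,
      h2.symm, h2']

theorem R7 {i k : Idx n} (h : k ≠ Idx.neg i) (a b : A) :
    ⁅D.TL i a, D.TL k b⁆ = 1 := by
  apply comm_eq_of
  rw [one_mul]
  ext1
  simp only [Units.val_mul, D.TL_val]
  have h' : i ≠ Idx.neg k := fun e => h (by rw [e, Idx.neg_neg])
  apply comm_one_of <;>
    simp [ssm, neg_eq_iff', h, h']

end FormRingData


/-! ### group-theoretic part -/

section grp

variable {G : Type*} [Group G]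

/-- Elements of `S` commuting with `y` modulo `N`. -/
def centMod (S N : Subgroup G) (hN : ∀ g ∈ S, ∀ x ∈ N, g * x * g⁻¹ ∈ N) (y : G) :
    Subgroup G where
  carrier := {x | x ∈ S ∧ ⁅x, y⁆ ∈ N}
  one_mem' := ⟨S.one_mem, by simp⟩
  mul_mem' := by
    rintro a b ⟨ha, ha'⟩ ⟨hb, hb'⟩
    refine ⟨S.mul_mem ha hb, ?_⟩
    have : ⁅a * b, y⁆ = a * ⁅b, y⁆ * a⁻¹ * ⁅a, y⁆ := by
      simp only [commutatorElement_def]; group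
    rw [this]
    exact N.mul_mem (hN a ha _ hb') ha'
  inv_mem' := by
    rintro a ⟨ha, ha'⟩
    refine ⟨S.inv_mem ha, ?_⟩
    have : ⁅a⁻¹, y⁆ = a⁻¹ * (⁅a, y⁆)⁻¹ * (a⁻¹)⁻¹ := by
      simp only [commutatorElement_def]; group
    rw [this]
    exact hN _ (S.inv_mem ha) _ (N.inv_mem ha')

theorem comm_swap_mem {N : Subgroup G} {x y : G} (h : ⁅x, y⁆ ∈ N) : ⁅y, x⁆ ∈ N := by
  rw [← commutatorElement_inv]; exact N.inv_mem h

theorem conj_closure_mem {P : Subgroup G} {s : Set G} {g : G}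
    (h : ∀ x ∈ s, g * x * g⁻¹ ∈ P) : ∀ x ∈ Subgroup.closure s, g * x * g⁻¹ ∈ P := by
  have : Subgroup.closure s ≤ P.comap (MulAut.conj g).toMonoidHom := by
    rw [Subgroup.closure_le]
    intro x hx
    simpa using h x hx
  intro x hx
  simpa using this hx

/-- The key group-theoretic reduction. -/
theorem grp_key (S N : Subgroup G) (s t : Set G) (hNS : N ≤ S)
    (hN : ∀ g ∈ S, ∀ x ∈ N, g * x * g⁻¹ ∈ N)
    (hs : s ⊆ S) (ht : t ⊆ S) (hst : ∀ x ∈ s, ∀ y ∈ t, ⁅x, y⁆ ∈ N)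
    (hS : S ≤ Subgroup.closure s ⊔ Subgroup.closure t) :
    ⁅Subgroup.closure {x | ∃ g ∈ S, ∃ u ∈ s, x = g * u * g⁻¹},
      Subgroup.closure {x | ∃ g ∈ S, ∃ u ∈ t, x = g * u * g⁻¹}⁆ ≤ N := by
  have hs' : Subgroup.closure s ≤ S := (Subgroup.closure_le _).2 hs
  have ht' : Subgroup.closure t ≤ S := (Subgroup.closure_le _).2 ht
  have c1 : ∀ x ∈ Subgroup.closure s, ∀ y ∈ Subgroup.closure t, ⁅x, y⁆ ∈ N := by
    have a1 : ∀ x ∈ Subgroup.closure s, ∀ y ∈ t, ⁅x, y⁆ ∈ N := by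
      intro x hx y hy
      have : Subgroup.closure s ≤ centMod S N hN y :=
        (Subgroup.closure_le _).2 fun z hz => ⟨hs hz, hst z hz y hy⟩
      exact (this hx).2
    intro x hx y hy
    have : Subgroup.closure t ≤ centMod S N hN x :=
      (Subgroup.closure_le _).2 fun z hz => ⟨ht hz, comm_swap_mem (a1 x hx z hz)⟩
    exact comm_swap_mem (this hy).2
  -- normal closures
  have key : ∀ H K : Subgroup G, H ≤ S → K ≤ S → (∀ x ∈ H, ∀ y ∈ K, ⁅x, y⁆ ∈ N) →
      S ≤ H ⊔ K → ∀ g ∈ S, ∀ x ∈ H, g * x * g⁻¹ ∈ H ⊔ N := by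
    intro H K hH hK hc hSS
    have hnorm : S ≤ (Subgroup.normalizer ((H ⊔ N : Subgroup G) : Set G)) := by
      have gen : ∀ L : Subgroup G, L ≤ S → (∀ g ∈ L, ∀ x ∈ H, g * x * g⁻¹ ∈ H ⊔ N) →
          L ≤ (Subgroup.normalizer ((H ⊔ N : Subgroup G) : Set G)) := by
        intro L hL hg
        have hh : ∀ g ∈ L, ∀ x ∈ H ⊔ N, g * x * g⁻¹ ∈ H ⊔ N := by
          intro g hgL x hx
          have : H ⊔ N ≤ (H ⊔ N).comap (MulAut.conj g).toMonoidHom := by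
            refine sup_le ?_ ?_
            · intro z hz; simpa using hg g hgL z hz
            · intro z hz
              have := hN g (hL hgL) z hz
              simpa using (le_sup_right : N ≤ H ⊔ N) this
          simpa using this hx
        intro g hgL
        rw [Subgroup.mem_normalizer_iff]
        intro x
        refine ⟨hh g hgL x, fun h => ?_⟩
        have := hh g⁻¹ (L.inv_mem hgL) _ h
        have e : g⁻¹ * (g * x * g⁻¹) * g⁻¹⁻¹ = x := by group
        rwa [e] at this
      refine hSS.trans (sup_le ?_ ?_)
      · refine gen H hH fun g hg x hx => ?_
        exact (le_sup_left : H ≤ H ⊔ N) (H.mul_mem (H.mul_mem hg hx) (H.inv_mem hg))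
      · refine gen K hK fun g hg x hx => ?_
        have e : g * x * g⁻¹ = ⁅g, x⁆ * x := by simp only [commutatorElement_def]; group
        rw [e]
        exact Subgroup.mul_mem _ ((le_sup_right : N ≤ H ⊔ N) (comm_swap_mem (hc x hx g hg)))
          ((le_sup_left : H ≤ H ⊔ N) hx)
    intro g hg x hx
    exact (Subgroup.mem_normalizer_iff.1 (hnorm hg) x).1 ((le_sup_left : H ≤ H ⊔ N) hx)
  have k1 := key _ _ hs' ht' c1 hS
  have k2 := key _ _ ht' hs' (fun x hx y hy => comm_swap_mem (c1 y hy x hx))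
    (by rwa [sup_comm])
  have e1 : Subgroup.closure {x | ∃ g ∈ S, ∃ u ∈ s, x = g * u * g⁻¹} ≤
      Subgroup.closure s ⊔ N := by
    rw [Subgroup.closure_le]
    rintro _ ⟨g, hg, u, hu, rfl⟩
    exact k1 g hg u (Subgroup.subset_closure hu)
  have e2 : Subgroup.closure {x | ∃ g ∈ S, ∃ u ∈ t, x = g * u * g⁻¹} ≤
      Subgroup.closure t ⊔ N := by
    rw [Subgroup.closure_le]
    rintro _ ⟨g, hg, u, hu, rfl⟩
    exact k2 g hg u (Subgroup.subset_closure hu)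
  have nc : ∀ y ∈ S, N ≤ centMod S N hN y := by
    intro y hy z hz
    refine ⟨hNS hz, ?_⟩
    have e : ⁅z, y⁆ = z * (y * z⁻¹ * y⁻¹) := by simp only [commutatorElement_def]; group
    rw [e]
    exact N.mul_mem hz (hN y hy _ (N.inv_mem hz))
  rw [Subgroup.commutator_le]
  intro x hx y hy
  have hx := e1 hx
  have hy := e2 hy
  have a1 : ∀ y ∈ Subgroup.closure t, ⁅x, y⁆ ∈ N := by
    intro y hy
    have : Subgroup.closure s ⊔ N ≤ centMod S N hN y :=
      sup_le (fun z hz => ⟨hs' hz, c1 z hz y hy⟩) (nc y (ht' hy))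
    exact (this hx).2
  have : Subgroup.closure t ⊔ N ≤ centMod S N hN x :=
    sup_le (fun z hz => ⟨ht' hz, comm_swap_mem (a1 z hz)⟩)
      (nc x ((sup_le hs' hNS : Subgroup.closure s ⊔ N ≤ S) hx))
  exact comm_swap_mem (this hy).2

end grp

namespace FormRingData

variable {A : Type*} [Ring A] {n : ℕ} (D : FormRingData A)

theorem EU_conj (I Γ : AddSubgroup A) : ∀ g ∈ D.EUmax n, ∀ x ∈ D.EU n I Γ,
    g * x * g⁻¹ ∈ D.EU n I Γ := by
  intro g hg
  apply conj_closure_mem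
  rintro _ ⟨h, hh, t, ht, rfl⟩
  refine Subgroup.subset_closure ⟨g * h, Subgroup.mul_mem _ hg hh, t, ht, ?_⟩
  group

theorem gen_mem_EU {I Γ : AddSubgroup A} {t : GLn A n} (ht : t ∈ D.transvGen n I Γ) :
    t ∈ D.EU n I Γ :=
  Subgroup.subset_closure ⟨1, Subgroup.one_mem _, t, ht, by simp⟩

theorem TS_gen {I : AddSubgroup A} (Γ : AddSubgroup A) {i j : Idx n} (h : i ≠ j)
    (h' : i ≠ Idx.neg j)
    {c : A} (hc : c ∈ I) : D.TS i j c ∈ D.transvGen n I Γ :=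
  Or.inl ⟨i, j, h, h', c, hc, rfl⟩

theorem TL_gen (I : AddSubgroup A) {Γ : AddSubgroup A} (i : Idx n)
    {c : A} (hc : c ∈ Γ) : D.TL i (D.mu i * c) ∈ D.transvGen n I Γ :=
  Or.inr ⟨i, c, hc, rfl⟩

theorem gen_mono {I Γ I' Γ' : AddSubgroup A} (h : I ≤ I') (h' : Γ ≤ Γ') :
    D.transvGen n I Γ ⊆ D.transvGen n I' Γ' := by
  rintro x (⟨i, j, h1, h2, c, hc, rfl⟩ | ⟨i, g, hg, rfl⟩)
  · exact D.TS_gen _ h1 h2 (h hc)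
  · exact D.TL_gen _ i (h' hg)

theorem EU_le (I : AddSubgroup A) {Γ : AddSubgroup A} (h : Γ ≤ D.Lambda) :
    D.EU n I Γ ≤ D.EUmax n := by
  refine (Subgroup.closure_le _).2 ?_
  rintro _ ⟨g, hg, t, ht, rfl⟩
  have : t ∈ D.EUmax n := Subgroup.subset_closure (D.gen_mono le_top h ht)
  exact Subgroup.mul_mem _ (Subgroup.mul_mem _ hg this) (Subgroup.inv_mem _ hg)

/-- parameters of short elements in `P` -/
def sPar (P : Subgroup (GLn A n)) {i j : Idx n} (h : i ≠ j) : AddSubgroup A where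
  carrier := {c | D.TS i j c ∈ P}
  zero_mem' := by simp [D.TS_zero h]
  add_mem' := by
    intro a b ha hb
    simp only [Set.mem_ofPred_eq] at *
    rw [D.TS_add h]; exact P.mul_mem ha hb
  neg_mem' := by
    intro a ha
    simp only [Set.mem_ofPred_eq] at *
    rw [D.TS_neg h]; exact P.inv_mem ha

/-- parameters of long elements in `P` -/
def lPar (P : Subgroup (GLn A n)) (i : Idx n) : AddSubgroup A where
  carrier := {c | D.TL i c ∈ P}
  zero_mem' := by simp [D.TL_zero]
  add_mem' := by
    intro a b ha hb
    simp only [Set.mem_ofPred_eq] at *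
    rw [D.TL_add]; exact P.mul_mem ha hb
  neg_mem' := by
    intro a ha
    simp only [Set.mem_ofPred_eq] at *
    rw [D.TL_neg]; exact P.inv_mem ha

theorem ab_symI {I J : AddSubgroup A} {a b : A} (ha : a ∈ I) (hb : b ∈ J) :
    a * b ∈ symI I J :=
  (le_sup_left : mulSub I J ≤ _) (AddSubgroup.subset_closure ⟨a, ha, b, hb, rfl⟩)

theorem ba_symI {I J : AddSubgroup A} {a b : A} (ha : a ∈ I) (hb : b ∈ J) :
    b * a ∈ symI I J :=
  (le_sup_right : mulSub J I ≤ _) (AddSubgroup.subset_closure ⟨b, hb, a, ha, rfl⟩)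

theorem symI_le {I J K : AddSubgroup A} (h1 : ∀ a ∈ I, ∀ b ∈ J, a * b ∈ K)
    (h2 : ∀ a ∈ I, ∀ b ∈ J, b * a ∈ K) : symI I J ≤ K := by
  refine sup_le ((AddSubgroup.closure_le _).2 ?_) ((AddSubgroup.closure_le _).2 ?_)
  · rintro _ ⟨a, ha, b, hb, rfl⟩; exact h1 a ha b hb
  · rintro _ ⟨a, ha, b, hb, rfl⟩; exact h2 b hb a ha

theorem symI_comm (I J : AddSubgroup A) : symI I J = symI J I := sup_comm _ _

theorem symG_comm (I Γ J Δ : AddSubgroup A) : D.symG I Γ J Δ = D.symG J Δ I Γ := by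
  unfold symG
  rw [symI_comm I J, sup_right_comm]

theorem EUsym_comm (I Γ J Δ : AddSubgroup A) : D.EUsym n I Γ J Δ = D.EUsym n J Δ I Γ := by
  unfold EUsym
  rw [symI_comm I J, symG_comm]

theorem symI_mul_right (FI FJ : FormIdeal D) (c : A) {x : A} (hx : x ∈ symI FI.I FJ.I) :
    x * c ∈ symI FI.I FJ.I := by
  have : symI FI.I FJ.I ≤ (symI FI.I FJ.I).comap (AddMonoidHom.mulRight c) := by
    apply symI_le
    · intro a ha b hb
      simp only [AddSubgroup.mem_comap, AddMonoidHom.coe_mulRight, mul_assoc]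
      exact ab_symI ha (FJ.mul_mem_right c b hb)
    · intro a ha b hb
      simp only [AddSubgroup.mem_comap, AddMonoidHom.coe_mulRight, mul_assoc]
      exact ba_symI (FI.mul_mem_right c a ha) hb
  exact this hx

theorem symI_bar (FI FJ : FormIdeal D) {x : A} (hx : x ∈ symI FI.I FJ.I) :
    D.bar x ∈ symI FI.I FJ.I := by
  have : symI FI.I FJ.I ≤ (symI FI.I FJ.I).comap D.bar := by
    apply symI_le
    · intro a ha b hb
      simp only [AddSubgroup.mem_comap, D.bar_mul]
      exact ba_symI (FI.bar_mem a ha) (FJ.bar_mem b hb)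
    · intro a ha b hb
      simp only [AddSubgroup.mem_comap, D.bar_mul]
      exact ab_symI (FI.bar_mem a ha) (FJ.bar_mem b hb)
  exact this hx

theorem min_mem_symG {I Γ J Δ : AddSubgroup A} {c : A} (hc : c ∈ symI I J) :
    c - D.lam * D.bar c ∈ D.symG I Γ J Δ :=
  (le_sup_left.trans le_sup_left : D.gammaMin (symI I J) ≤ D.symG I Γ J Δ)
    (AddSubgroup.subset_closure (Or.inl ⟨c, hc, rfl⟩))

theorem conj_mem_symG1 {I Γ J Δ : AddSubgroup A} {b g : A} (hb : b ∈ J) (hg : g ∈ Γ) :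
    b * g * D.bar b ∈ D.symG I Γ J Δ :=
  (le_sup_right.trans le_sup_left : D.conjPar J Γ ≤ D.symG I Γ J Δ)
    (AddSubgroup.subset_closure ⟨b, hb, g, hg, rfl⟩)

theorem conj_mem_symG2 {I Γ J Δ : AddSubgroup A} {b g : A} (hb : b ∈ I) (hg : g ∈ Δ) :
    b * g * D.bar b ∈ D.symG I Γ J Δ :=
  (le_sup_right : D.conjPar I Δ ≤ D.symG I Γ J Δ)
    (AddSubgroup.subset_closure ⟨b, hb, g, hg, rfl⟩)

theorem cross (a b : A) {c : A} (hc : c ∈ D.Lambda) :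
    (a + b) * c * D.bar (a + b) = a * c * D.bar a + b * c * D.bar b +
      (a * c * D.bar b - D.lam * D.bar (a * c * D.bar b)) := by
  have : D.lam * D.bar (a * c * D.bar b) = - (b * c * D.bar a) := by
    rw [D.bar_mul, D.bar_mul, D.bar_bar, D.bar_Lambda hc]
    rw [← D.m1 b]
    simp only [neg_mul, mul_neg, mul_assoc]
    rw [D.l1]
  rw [this, map_add]
  noncomm_ring

theorem symG_le (FI FJ : FormIdeal D) {K : AddSubgroup A}
    (h0 : ∀ c ∈ symI FI.I FJ.I, c - D.lam * D.bar c ∈ K)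
    (h1 : ∀ b ∈ FJ.I, ∀ g ∈ FI.Gamma, b * g * D.bar b ∈ K)
    (h2 : ∀ b ∈ FI.I, ∀ g ∈ FJ.Gamma, b * g * D.bar b ∈ K) :
    D.symG FI.I FI.Gamma FJ.I FJ.Gamma ≤ K := by
  refine sup_le (sup_le ((AddSubgroup.closure_le _).2 ?_) ((AddSubgroup.closure_le _).2 ?_))
    ((AddSubgroup.closure_le _).2 ?_)
  · rintro x (⟨a, ha, rfl⟩ | ⟨a, ha, c, hc, rfl⟩)
    · exact h0 a ha
    · let Q : AddSubgroup A :=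
        { carrier := {a | a ∈ symI FI.I FJ.I ∧ a * c * D.bar a ∈ K}
          zero_mem' := ⟨zero_mem _, by simp⟩
          add_mem' := by
            rintro a b ⟨ha, ha'⟩ ⟨hb, hb'⟩
            refine ⟨add_mem ha hb, ?_⟩
            rw [D.cross a b hc]
            refine add_mem (add_mem ha' hb') (h0 _ ?_)
            exact D.symI_mul_right FI FJ _ (D.symI_mul_right FI FJ _ ha)
          neg_mem' := by
            rintro a ⟨ha, ha'⟩
            refine ⟨neg_mem ha, ?_⟩
            simpa using ha' }
      have hQ : symI FI.I FJ.I ≤ Q := by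
        have e : ∀ a b : A, a * b * c * D.bar (a * b) = a * (b * c * D.bar b) * D.bar a := by
          intro a b; rw [D.bar_mul]; noncomm_ring
        apply symI_le
        · intro a ha b hb
          refine ⟨ab_symI ha hb, ?_⟩
          rw [e]
          exact h2 a ha _ (FJ.gammaMin_le (AddSubgroup.subset_closure (Or.inr ⟨b, hb, c, hc, rfl⟩)))
        · intro a ha b hb
          refine ⟨ba_symI ha hb, ?_⟩
          rw [e]
          exact h1 b hb _ (FI.gammaMin_le (AddSubgroup.subset_closure (Or.inr ⟨a, ha, c, hc, rfl⟩)))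
      exact (hQ ha).2
  · rintro _ ⟨b, hb, g, hg, rfl⟩; exact h1 b hb g hg
  · rintro _ ⟨b, hb, g, hg, rfl⟩; exact h2 b hb g hg

theorem symG_le_Lambda (FI FJ : FormIdeal D) :
    D.symG FI.I FI.Gamma FJ.I FJ.Gamma ≤ D.Lambda := by
  apply D.symG_le
  · intro c _; exact D.lambdaMin_mem c
  · intro b _ g hg; exact D.lambda_conj _ _ (FI.gamma_le_Lambda hg)
  · intro b _ g hg; exact D.lambda_conj _ _ (FJ.gamma_le_Lambda hg)

theorem neg_symm {i j : Idx n} (h : i ≠ Idx.neg j) : j ≠ Idx.neg i :=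
  fun e => h (by rw [e, Idx.neg_neg])

/-- Inclusion `⊇`. -/
theorem sup_incl (hn : 3 ≤ n) (FI FJ : FormIdeal D) :
    D.EUsym n FI.I FI.Gamma FJ.I FJ.Gamma ≤
      ⁅D.EU n FI.I FI.Gamma, D.EU n FJ.I FJ.Gamma⁆ := by
  set P := ⁅D.EU n FI.I FI.Gamma, D.EU n FJ.I FJ.Gamma⁆ with hP
  have hPn : ∀ g ∈ D.EUmax n, ∀ x ∈ P, g * x * g⁻¹ ∈ P := by
    intro g hg
    rw [hP, Subgroup.commutator_def]
    apply conj_closure_mem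
    rintro _ ⟨x, hx, y, hy, rfl⟩
    refine Subgroup.subset_closure ⟨g * x * g⁻¹, D.EU_conj _ _ g hg x hx,
      g * y * g⁻¹, D.EU_conj _ _ g hg y hy, ?_⟩
    simp only [commutatorElement_def]; group
  have c1 : ∀ x ∈ D.transvGen n FI.I FI.Gamma, ∀ y ∈ D.transvGen n FJ.I FJ.Gamma, ⁅x, y⁆ ∈ P :=
    fun x hx y hy => Subgroup.commutator_mem_commutator (D.gen_mem_EU hx) (D.gen_mem_EU hy)
  have c2 : ∀ x ∈ D.transvGen n FI.I FI.Gamma, ∀ y ∈ D.transvGen n FJ.I FJ.Gamma, ⁅y, x⁆ ∈ P :=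
    fun x hx y hy => comm_swap_mem (c1 x hx y hy)
  have hS : ∀ i j : Idx n, i ≠ j → i ≠ Idx.neg j → ∀ c ∈ symI FI.I FJ.I, D.TS i j c ∈ P := by
    intro i j hij hij'
    obtain ⟨k, h1, h2, h3, h4⟩ := exists_third hn i j
    have h5 := neg_symm h2
    have : symI FI.I FJ.I ≤ D.sPar P hij := by
      apply symI_le
      · intro a ha b hb
        change D.TS i j (a * b) ∈ P
        rw [← D.R1 h1.symm h5 h3 h4 hij hij']
        exact c1 _ (D.TS_gen _ h1.symm h5 ha) _ (D.TS_gen _ h3 h4 hb)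
      · intro a ha b hb
        change D.TS i j (b * a) ∈ P
        rw [← D.R1 h1.symm h5 h3 h4 hij hij']
        exact c2 _ (D.TS_gen _ h3 h4 ha) _ (D.TS_gen _ h1.symm h5 hb)
    exact this
  have hL : ∀ i : Idx n, ∀ c ∈ D.symG FI.I FI.Gamma FJ.I FJ.Gamma, D.TL i (D.mu i * c) ∈ P := by
    intro i
    obtain ⟨j, h1, h2, -, -⟩ := exists_third hn i i
    have h5 := neg_symm h2
    have h6 : j ≠ Idx.neg (Idx.neg i) := by rwa [Idx.neg_neg]
    have hmin : symI FI.I FJ.I ≤ (D.lPar P i).comap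
        { toFun := fun d => d - D.star i (Idx.neg i) d
          map_zero' := by simp [star]
          map_add' := by intro a b; rw [star_add]; abel } := by
      apply symI_le
      · intro a ha b hb
        change D.TL i (a * b - D.star i (Idx.neg i) (a * b)) ∈ P
        rw [← D.R2 h1.symm h5]
        exact c1 _ (D.TS_gen _ h1.symm h5 ha) _ (D.TS_gen _ h2 h6 hb)
      · intro a ha b hb
        change D.TL i (b * a - D.star i (Idx.neg i) (b * a)) ∈ P
        rw [← D.R2 h1.symm h5]
        exact c2 _ (D.TS_gen _ h2 h6 ha) _ (D.TS_gen _ h1.symm h5 hb)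
    have : D.symG FI.I FI.Gamma FJ.I FJ.Gamma ≤
        (D.lPar P i).comap (AddMonoidHom.mulLeft (D.mu i)) := by
      apply D.symG_le
      · intro c hc
        change D.TL i (D.mu i * (c - D.lam * D.bar c)) ∈ P
        rw [D.mu_min]
        refine hmin ?_
        split_ifs
        · exact neg_mem (D.symI_bar FI FJ hc)
        · exact hc
      · intro b hb g hg
        change D.TL i (D.mu i * (b * g * D.bar b)) ∈ P
        have := c2 _ (D.TL_gen FI.I j hg) _ (D.TS_gen FJ.Gamma h1.symm h5 hb)
        rw [D.R4 h1.symm h5 b (FI.gamma_le_Lambda hg)] at this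
        refine (Subgroup.mul_mem_cancel_left _ ?_).1 this
        exact hS _ _ h5 (by rw [Idx.neg_neg]; exact h1.symm) _
          (ba_symI (FI.mul_mem_left _ _ (FI.gamma_le_I hg)) hb)
      · intro b hb g hg
        change D.TL i (D.mu i * (b * g * D.bar b)) ∈ P
        have := c1 _ (D.TS_gen FI.Gamma h1.symm h5 hb) _ (D.TL_gen FJ.I j hg)
        rw [D.R4 h1.symm h5 b (FJ.gamma_le_Lambda hg)] at this
        refine (Subgroup.mul_mem_cancel_left _ ?_).1 this
        exact hS _ _ h5 (by rw [Idx.neg_neg]; exact h1.symm) _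
          (ab_symI hb (FJ.mul_mem_left _ _ (FJ.gamma_le_I hg)))
    exact this
  refine (Subgroup.closure_le _).2 ?_
  rintro _ ⟨g, hg, t, (⟨i, j, h1, h2, c, hc, rfl⟩ | ⟨i, c, hc, rfl⟩), rfl⟩
  · exact hPn g hg _ (hS i j h1 h2 c hc)
  · exact hPn g hg _ (hL i c hc)

/-! ### the other inclusion -/

section incl

variable (FI FJ : FormIdeal D)

theorem NS {i j : Idx n} (h : i ≠ j) (h' : i ≠ Idx.neg j) {c : A} (hc : c ∈ symI FI.I FJ.I) :
    D.TS i j c ∈ D.EUsym n FI.I FI.Gamma FJ.I FJ.Gamma :=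
  D.gen_mem_EU (D.TS_gen _ h h' hc)

theorem NL (i : Idx n) {c : A} (hc : c ∈ D.symG FI.I FI.Gamma FJ.I FJ.Gamma) :
    D.TL i (D.mu i * c) ∈ D.EUsym n FI.I FI.Gamma FJ.I FJ.Gamma :=
  D.gen_mem_EU (D.TL_gen _ i hc)

theorem NLmin (i : Idx n) {c : A} (hc : c ∈ symI FI.I FJ.I) :
    D.TL i (c - D.star i (Idx.neg i) c) ∈ D.EUsym n FI.I FI.Gamma FJ.I FJ.Gamma := by
  rw [D.min_mu]
  refine D.NL FI FJ i (D.min_mem_symG ?_)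
  split_ifs
  · exact neg_mem (D.symI_bar FI FJ hc)
  · exact hc

/-- adjacent, non-opposite short roots -/
theorem SS_adj {i j l : Idx n} (hij : i ≠ j) (hij' : i ≠ Idx.neg j) (hjl : j ≠ l)
    (hjl' : j ≠ Idx.neg l) (hil : i ≠ l) {a b : A} (ha : a ∈ FI.I) (hb : b ∈ FJ.I) :
    ⁅D.TS i j a, D.TS j l b⁆ ∈ D.EUsym n FI.I FI.Gamma FJ.I FJ.Gamma := by
  by_cases h : l = Idx.neg i
  · subst h
    rw [D.R2 hij hij']
    exact D.NLmin FI FJ i (ab_symI ha hb)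
  · have h' : i ≠ Idx.neg l := neg_symm h
    rw [D.R1 hij hij' hjl hjl' hil h']
    exact D.NS FI FJ hil h' (ab_symI ha hb)

theorem SL_adj {i j : Idx n} (hij : i ≠ j) (hij' : i ≠ Idx.neg j)
    {a g : A} (ha : a ∈ FI.I) (hg : g ∈ FJ.Gamma) :
    ⁅D.TS i j a, D.TL j (D.mu j * g)⁆ ∈ D.EUsym n FI.I FI.Gamma FJ.I FJ.Gamma := by
  rw [D.R4 hij hij' a (FJ.gamma_le_Lambda hg)]
  refine Subgroup.mul_mem _ ?_ ?_
  · exact D.NS FI FJ hij' (by rwa [Idx.neg_neg]) (ab_symI ha (FJ.mul_mem_left _ _ (FJ.gamma_le_I hg)))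
  · exact D.NL FI FJ i (D.conj_mem_symG2 ha hg)

theorem star_mem (i j : Idx n) {a : A} (ha : a ∈ FI.I) : -(D.star i j a) ∈ FI.I :=
  neg_mem (FI.mul_mem_left _ _ (FI.bar_mem _ ha))

theorem SL {i j k : Idx n} (hij : i ≠ j) (hij' : i ≠ Idx.neg j)
    {a g : A} (ha : a ∈ FI.I) (hg : g ∈ FJ.Gamma) :
    ⁅D.TS i j a, D.TL k (D.mu k * g)⁆ ∈ D.EUsym n FI.I FI.Gamma FJ.I FJ.Gamma := by
  by_cases h1 : j = k
  · subst h1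
    exact D.SL_adj FI FJ hij hij' ha hg
  by_cases h2 : i = Idx.neg k
  · have h2' : k = Idx.neg i := by rw [h2, Idx.neg_neg]
    subst h2'
    rw [D.TS_flip hij]
    refine D.SL_adj FI FJ ?_ ?_ (D.star_mem FI _ _ ha) hg
    · exact fun e => hij (Idx.neg_injective e).symm
    · rw [Idx.neg_neg]; exact hij'.symm
  · rw [D.R6 hij h1 h2]
    exact Subgroup.one_mem _

variable (hn : 3 ≤ n) (hcom : FI.I ⊔ FJ.I = ⊤)

include hcom in
theorem exists_uv : ∃ u ∈ FI.I, ∃ v ∈ FJ.I, u + v = 1 := by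
  have : (1 : A) ∈ FI.I ⊔ FJ.I := by rw [hcom]; trivial
  exact AddSubgroup.mem_sup.1 this

theorem Nconj : ∀ g ∈ D.EUmax n, ∀ x ∈ D.EUsym n FI.I FI.Gamma FJ.I FJ.Gamma,
    g * x * g⁻¹ ∈ D.EUsym n FI.I FI.Gamma FJ.I FJ.Gamma := D.EU_conj _ _

theorem N_le : D.EUsym n FI.I FI.Gamma FJ.I FJ.Gamma ≤ D.EUmax n :=
  D.EU_le _ (D.symG_le_Lambda FI FJ)

theorem gen_max {t : GLn A n} (ht : t ∈ D.transvGen n FI.I FI.Gamma) : t ∈ D.EUmax n :=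
  Subgroup.subset_closure (D.gen_mono le_top FI.gamma_le_Lambda ht)

theorem N_cent {x y : GLn A n} (hx : x ∈ D.EUsym n FI.I FI.Gamma FJ.I FJ.Gamma)
    (hy : y ∈ D.EUmax n) :
    x ∈ centMod (D.EUmax n) _ (D.Nconj FI FJ) y := by
  refine ⟨D.N_le FI FJ hx, ?_⟩
  have e : ⁅x, y⁆ = x * (y * x⁻¹ * y⁻¹) := by simp only [commutatorElement_def]; group
  rw [e]
  exact Subgroup.mul_mem _ hx (D.Nconj FI FJ y hy _ (Subgroup.inv_mem _ hx))

include hn hcom in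
theorem SS_opp {i j : Idx n} (hij : i ≠ j) (hij' : i ≠ Idx.neg j)
    {a b : A} (ha : a ∈ FI.I) (hb : b ∈ FJ.I) :
    ⁅D.TS i j a, D.TS j i b⁆ ∈ D.EUsym n FI.I FI.Gamma FJ.I FJ.Gamma := by
  obtain ⟨u, hu, v, hv, huv⟩ := D.exists_uv FI FJ hcom
  obtain ⟨k, h1, h2, h3, h4⟩ := exists_third hn i j
  have h5 := neg_symm h2
  have hji' := neg_symm hij'
  set y := D.TS j i b with hy
  have hyG : y ∈ D.EUmax n := D.gen_max FJ (D.TS_gen _ hij.symm hji' hb)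
  suffices h : D.TS i j a ∈ centMod (D.EUmax n) _ (D.Nconj FI FJ) y from h.2
  have ea : a = a * u + a * v := by rw [← mul_add, huv, mul_one]
  rw [ea, D.TS_add hij]
  refine Subgroup.mul_mem _ ?_ ?_
  · rw [← D.R1 h1.symm h5 h3 h4 hij hij', commutatorElement_def]
    have m1 : D.TS i k a ∈ centMod (D.EUmax n) _ (D.Nconj FI FJ) y := by
      refine ⟨D.gen_max FI (D.TS_gen _ h1.symm h5 ha), comm_swap_mem ?_⟩
      rw [D.EUsym_comm]
      exact D.SS_adj FJ FI hij.symm hji' h1.symm h5 h3.symm hb ha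
    have m2 : D.TS k j u ∈ centMod (D.EUmax n) _ (D.Nconj FI FJ) y :=
      ⟨D.gen_max FI (D.TS_gen _ h3 h4 hu), D.SS_adj FI FJ h3 h4 hij.symm hji' h1 hu hb⟩
    exact Subgroup.mul_mem _ (Subgroup.mul_mem _ (Subgroup.mul_mem _ m1 m2)
      (Subgroup.inv_mem _ m1)) (Subgroup.inv_mem _ m2)
  · exact D.N_cent FI FJ (D.NS FI FJ hij hij' (ab_symI ha hv)) hyG

include hn hcom in
theorem SS1 {i j l : Idx n} (hij : i ≠ j) (hij' : i ≠ Idx.neg j) (hjl : j ≠ l)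
    (hjl' : j ≠ Idx.neg l) {a b : A} (ha : a ∈ FI.I) (hb : b ∈ FJ.I) :
    ⁅D.TS i j a, D.TS j l b⁆ ∈ D.EUsym n FI.I FI.Gamma FJ.I FJ.Gamma := by
  by_cases h : i = l
  · subst h; exact D.SS_opp FI FJ hn hcom hij hij' ha hb
  · exact D.SS_adj FI FJ hij hij' hjl hjl' h ha hb

include hn hcom in
theorem SS {i j k l : Idx n} (hij : i ≠ j) (hij' : i ≠ Idx.neg j) (hkl : k ≠ l)
    (hkl' : k ≠ Idx.neg l) {a b : A} (ha : a ∈ FI.I) (hb : b ∈ FJ.I) :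
    ⁅D.TS i j a, D.TS k l b⁆ ∈ D.EUsym n FI.I FI.Gamma FJ.I FJ.Gamma := by
  have fl : ∀ {i j : Idx n}, i ≠ j → Idx.neg j ≠ Idx.neg i :=
    fun h e => h (Idx.neg_injective e).symm
  have fl' : ∀ {i j : Idx n}, i ≠ Idx.neg j → Idx.neg j ≠ Idx.neg (Idx.neg i) := by
    intro i j h e; rw [Idx.neg_neg] at e; exact h e.symm
  by_cases h1 : j = k
  · subst h1; exact D.SS1 FI FJ hn hcom hij hij' hkl hkl' ha hb
  by_cases h2 : j = Idx.neg l
  · subst h2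
    rw [D.TS_flip hkl]
    exact D.SS1 FI FJ hn hcom hij hij' (fl hkl) (fl' hkl') ha (D.star_mem FJ _ _ hb)
  by_cases h3 : i = Idx.neg k
  · have : k = Idx.neg i := by rw [h3, Idx.neg_neg]
    subst this
    rw [D.TS_flip hij]
    exact D.SS1 FI FJ hn hcom (fl hij) (fl' hij') hkl hkl' (D.star_mem FI _ _ ha) hb
  by_cases h4 : i = l
  · subst h4
    rw [D.TS_flip hij, D.TS_flip hkl]
    exact D.SS1 FI FJ hn hcom (fl hij) (fl' hij') (fl hkl) (fl' hkl')
      (D.star_mem FI _ _ ha) (D.star_mem FJ _ _ hb)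
  rw [D.R5 hij hkl h1 h2 h3 h4]
  exact Subgroup.one_mem _

include hn hcom in
theorem LL (i k : Idx n) {g d : A} (hg : g ∈ FI.Gamma) (hd : d ∈ FJ.Gamma) :
    ⁅D.TL i (D.mu i * g), D.TL k (D.mu k * d)⁆ ∈ D.EUsym n FI.I FI.Gamma FJ.I FJ.Gamma := by
  by_cases hk : k = Idx.neg i
  swap
  · rw [D.R7 hk]; exact Subgroup.one_mem _
  have hgL := FI.gamma_le_Lambda hg
  obtain ⟨u, hu, v, hv, huv⟩ := D.exists_uv FI FJ hcom
  obtain ⟨j, h1, h2, -, -⟩ := exists_third hn i i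
  have h5 := neg_symm h2
  set y := D.TL k (D.mu k * d) with hy
  have hyG : y ∈ D.EUmax n := D.gen_max FJ (D.TL_gen _ k hd)
  suffices h : D.TL i (D.mu i * g) ∈ centMod (D.EUmax n) _ (D.Nconj FI FJ) y from h.2
  have hs : ∀ {p q : Idx n}, p ≠ q → p ≠ Idx.neg q → ∀ {a : A}, a ∈ FI.I →
      D.TS p q a ∈ centMod (D.EUmax n) _ (D.Nconj FI FJ) y := by
    intro p q h h' a ha
    exact ⟨D.gen_max FI (D.TS_gen _ h h' ha), D.SL FI FJ h h' ha hd⟩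
  have eg : g = u * g * D.bar u + (v * g * D.bar v +
      (u * g * D.bar v - D.lam * D.bar (u * g * D.bar v))) := by
    rw [← add_assoc, ← D.cross u v hgL, huv, D.bar_one, one_mul, mul_one]
  rw [eg, mul_add, D.TL_add]
  refine Subgroup.mul_mem _ ?_ ?_
  · have r := D.R4 h1.symm h5 u hgL
    rw [eq_inv_mul_iff_mul_eq.2 r.symm, commutatorElement_def]
    have m0 := hs h5 (by rw [Idx.neg_neg]; exact h1.symm)
      (FI.mul_mem_right (D.mu j * g) _ hu)
    have m1 := hs h1.symm h5 hu
    have m2 : D.TL j (D.mu j * g) ∈ centMod (D.EUmax n) _ (D.Nconj FI FJ) y := by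
      refine ⟨D.gen_max FI (D.TL_gen _ j hg), ?_⟩
      rw [hy, D.R7]
      · exact Subgroup.one_mem _
      · rw [hk]; intro e; exact h1 (Idx.neg_injective e).symm
    exact Subgroup.mul_mem _ (Subgroup.inv_mem _ m0) (Subgroup.mul_mem _ (Subgroup.mul_mem _
      (Subgroup.mul_mem _ m1 m2) (Subgroup.inv_mem _ m1)) (Subgroup.inv_mem _ m2))
  · refine D.N_cent FI FJ (D.NL FI FJ i (add_mem ?_ ?_)) hyG
    · exact D.conj_mem_symG1 hv hg
    · refine D.min_mem_symG (ab_symI (FI.mul_mem_right _ _ hu) (FJ.bar_mem _ hv))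

include hn hcom in
theorem gen_comm : ∀ x ∈ D.transvGen n FI.I FI.Gamma, ∀ y ∈ D.transvGen n FJ.I FJ.Gamma,
    ⁅x, y⁆ ∈ D.EUsym n FI.I FI.Gamma FJ.I FJ.Gamma := by
  rintro x (⟨i, j, h1, h2, c, hc, rfl⟩ | ⟨i, g, hg, rfl⟩) y
    (⟨k, l, h3, h4, b, hb, rfl⟩ | ⟨k, d, hd, rfl⟩)
  · exact D.SS FI FJ hn hcom h1 h2 h3 h4 hc hb
  · exact D.SL FI FJ h1 h2 hc hd
  · apply comm_swap_mem
    rw [D.EUsym_comm]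
    exact D.SL FJ FI h3 h4 hb hg
  · exact D.LL FI FJ hn hcom i k hg hd

include hcom in
theorem max_le : D.EUmax n ≤ Subgroup.closure (D.transvGen n FI.I FI.Gamma) ⊔
    Subgroup.closure (D.transvGen n FJ.I FJ.Gamma) := by
  obtain ⟨u, hu, v, hv, huv⟩ := D.exists_uv FI FJ hcom
  have l : ∀ {t}, t ∈ D.transvGen n FI.I FI.Gamma →
      t ∈ Subgroup.closure (D.transvGen n FI.I FI.Gamma) ⊔
    Subgroup.closure (D.transvGen n FJ.I FJ.Gamma) :=
    fun h => Subgroup.mem_sup_left (Subgroup.subset_closure h)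
  have r : ∀ {t}, t ∈ D.transvGen n FJ.I FJ.Gamma →
      t ∈ Subgroup.closure (D.transvGen n FI.I FI.Gamma) ⊔
    Subgroup.closure (D.transvGen n FJ.I FJ.Gamma) :=
    fun h => Subgroup.mem_sup_right (Subgroup.subset_closure h)
  refine (Subgroup.closure_le _).2 ?_
  rintro x (⟨i, j, h1, h2, c, -, rfl⟩ | ⟨i, g, hg, rfl⟩)
  · have e : c = u * c + v * c := by rw [← add_mul, huv, one_mul]
    rw [e, D.TS_add h1]
    exact Subgroup.mul_mem _ (l (D.TS_gen _ h1 h2 (FI.mul_mem_right _ _ hu)))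
      (r (D.TS_gen _ h1 h2 (FJ.mul_mem_right _ _ hv)))
  · change D.TL i (D.mu i * g) ∈ Subgroup.closure (D.transvGen n FI.I FI.Gamma) ⊔
      Subgroup.closure (D.transvGen n FJ.I FJ.Gamma)
    have eg : g = u * g * D.bar u + v * g * D.bar v +
        (u * g * D.bar v - D.lam * D.bar (u * g * D.bar v)) := by
      rw [← D.cross u v hg, huv, D.bar_one, one_mul, mul_one]
    rw [eg, mul_add, D.TL_add, mul_add, D.TL_add]
    refine Subgroup.mul_mem _ (Subgroup.mul_mem _ (l ?_) (r ?_)) (l ?_)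
    · exact D.TL_gen _ i (FI.gammaMin_le (AddSubgroup.subset_closure (Or.inr ⟨u, hu, g, hg, rfl⟩)))
    · exact D.TL_gen _ i (FJ.gammaMin_le (AddSubgroup.subset_closure (Or.inr ⟨v, hv, g, hg, rfl⟩)))
    · exact D.TL_gen _ i (FI.gammaMin_le (AddSubgroup.subset_closure
        (Or.inl ⟨_, FI.mul_mem_right _ _ (FI.mul_mem_right _ _ hu), rfl⟩)))

end incl

end FormRingData

/-- Theorem 8: for comaximal form ideals `I + J = A` the mixed commutator
subgroup `[EU(2n,I,Γ), EU(2n,J,Δ)]` equals `EU(2n,(I,Γ)∘(J,Δ))`. -/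
theorem statement5 {A : Type*} [Ring A] (D : FormRingData A) (n : ℕ) (hn : 3 ≤ n)
    (FI FJ : FormIdeal D) (hcom : FI.I ⊔ FJ.I = ⊤) :
    ⁅D.EU n FI.I FI.Gamma, D.EU n FJ.I FJ.Gamma⁆ =
      D.EUsym n FI.I FI.Gamma FJ.I FJ.Gamma := by
  refine le_antisymm ?_ (D.sup_incl hn FI FJ)
  exact grp_key (D.EUmax n) _ (D.transvGen n FI.I FI.Gamma) (D.transvGen n FJ.I FJ.Gamma)
    (D.N_le FI FJ) (D.Nconj FI FJ) (fun _ h => D.gen_max FI h) (fun _ h => D.gen_max FJ h)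
    (D.gen_comm FI FJ hn hcom) (D.max_le FI FJ hcom)
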